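/- arXiv:2411.01246 — 2 statements merged into one kernel-verified Lean document; each statement's English description precedes it below -/
import Mathlib

section
/- For all positive natural numbers x and y and every precision p ≥ 1, if b(x) < b(y) (i.e., x and y have different orders of magnitude, with x's highest-order bit strictly lower than y's), then round_p(x) < round_p(y); that is, values of different orders of magnitude remain distinct after rounding. -/
/-- Position of the highest-order nonzero bit of `x`: `b(x) = ⌊log₂ x⌋ + 1`. -/
def bpos (x : ℕ) : ℕ := Nat.log 2 x + 1

/-- Rounding of `x` to precision `p`: keep the `p` most significant bits,
zeroing out the `b(x) - p` lowest-order bits. -/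
def roundP (p x : ℕ) : ℕ :=
  if bpos x ≤ p then x else 2 ^ (bpos x - p) * (x / 2 ^ (bpos x - p))

/-! Rounding sends `y` to the largest multiple of `2 ^ (b(y) - p)` not exceeding `y`. As `p ≥ 1`,
the leading power `2 ^ (b(y) - 1)` of `y` is such a multiple, so it survives the rounding of `y`;
being larger than `x`, it separates the two rounded values. -/

theorem lt_two_pow_bpos (x : ℕ) : x < 2 ^ bpos x :=
  Nat.lt_pow_succ_log_self Nat.one_lt_two x

theorem two_pow_bpos_sub_one_le {x : ℕ} (hx : x ≠ 0) : 2 ^ (bpos x - 1) ≤ x :=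
  Nat.pow_log_le_self 2 hx

-- For `bpos x ≤ p` the truncated exponent `bpos x - p` is `0`, so no case distinction is needed.
theorem roundP_eq_mul_div (p x : ℕ) :
    roundP p x = 2 ^ (bpos x - p) * (x / 2 ^ (bpos x - p)) := by
  unfold roundP
  split_ifs with h
  · simp [Nat.sub_eq_zero_of_le h]
  · rfl

theorem roundP_le_self (p x : ℕ) : roundP p x ≤ x := by
  rw [roundP_eq_mul_div]
  exact Nat.mul_div_le x _

theorem le_roundP_of_dvd {p x m : ℕ} (hdvd : 2 ^ (bpos x - p) ∣ m) (hle : m ≤ x) :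
    m ≤ roundP p x :=
  calc
    m = 2 ^ (bpos x - p) * (m / 2 ^ (bpos x - p)) := (Nat.mul_div_cancel' hdvd).symm
    _ ≤ 2 ^ (bpos x - p) * (x / 2 ^ (bpos x - p)) := by gcongr
    _ = roundP p x := (roundP_eq_mul_div p x).symm

theorem two_pow_bpos_sub_one_le_roundP {p x : ℕ} (hp : 1 ≤ p) (hx : x ≠ 0) :
    2 ^ (bpos x - 1) ≤ roundP p x :=
  le_roundP_of_dvd (pow_dvd_pow 2 (Nat.sub_le_sub_left hp _)) (two_pow_bpos_sub_one_le hx)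

theorem roundP_lt_of_bpos_lt (x y p : ℕ) (hx : 0 < x) (hy : 0 < y) (hp : 1 ≤ p)
    (hb : bpos x < bpos y) : roundP p x < roundP p y :=
  calc
    roundP p x ≤ x := roundP_le_self p x
    _ < 2 ^ bpos x := lt_two_pow_bpos x
    _ ≤ 2 ^ (bpos y - 1) := Nat.pow_le_pow_right Nat.two_pos (Nat.le_sub_one_of_lt hb)
    _ ≤ roundP p y := two_pow_bpos_sub_one_le_roundP hp hy.ne'
end

section
/- Rounding to precision p is monotone: for all positive natural numbers x and y with x ≤ y and every precision p ≥ 1, round_p(x) ≤ round_p(y). -/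
theorem two_pow_dvd_roundP (p x : ℕ) : 2 ^ (bpos x - p) ∣ roundP p x :=
  roundP_eq_mul_div p x ▸ Nat.dvd_mul_right _ _

theorem le_roundP_of_two_pow_dvd {p x z : ℕ} (hdvd : 2 ^ (bpos x - p) ∣ z) (hzx : z ≤ x) :
    z ≤ roundP p x :=
  calc
    z = 2 ^ (bpos x - p) * (z / 2 ^ (bpos x - p)) := (Nat.mul_div_cancel' hdvd).symm
    _ ≤ 2 ^ (bpos x - p) * (x / 2 ^ (bpos x - p)) := by gcongr
    _ = roundP p x := (roundP_eq_mul_div p x).symm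

theorem two_pow_log_le_roundP {p x : ℕ} (hx : x ≠ 0) (hp : 1 ≤ p) :
    2 ^ Nat.log 2 x ≤ roundP p x := by
  have hexp : bpos x - p ≤ Nat.log 2 x := by unfold bpos; lia
  exact le_roundP_of_two_pow_dvd (pow_dvd_pow 2 hexp) (Nat.pow_log_le_self 2 hx)

theorem roundP_monotone (x y p : ℕ) (hx : 0 < x) (hy : 0 < y) (hp : 1 ≤ p)
    (hxy : x ≤ y) : roundP p x ≤ roundP p y := by
  obtain hlt | hle := lt_or_ge x (2 ^ Nat.log 2 y)
  · exact (roundP_le_self p x).trans (hlt.le.trans (two_pow_log_le_roundP hy.ne' hp))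
  · have hbpos : bpos y ≤ bpos x := Nat.succ_le_succ (Nat.le_log_of_pow_le one_lt_two hle)
    have hdvd : 2 ^ (bpos y - p) ∣ roundP p x :=
      (pow_dvd_pow 2 (Nat.sub_le_sub_right hbpos p)).trans (two_pow_dvd_roundP p x)
    exact le_roundP_of_two_pow_dvd hdvd ((roundP_le_self p x).trans hxy)
end
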